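/- Let Ω ⊊ ℝⁿ (n ≥ 2) be a convex proper subdomain and x, y ∈ Ω. Then the quasihyperbolic geodesic from x to y is unique: if γ₁ and γ₂ are rectifiable arcs in Ω from x to y with ℓ_k(γ₁) = ℓ_k(γ₂) = k_Ω(x,y), then γ₁ and γ₂ have the same image. -/

import Mathlib

open Set Metric MeasureTheory

noncomputable section

variable {E : Type*} [NormedAddCommGroup E] [NormedSpace ℝ E]

/-- The quasihyperbolic length of a path `γ` (parametrized on `[0,1]`) in the
domain `Ω`: the integral of `‖γ'(t)‖ / d(γ(t), ∂Ω)`. -/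
def qhLength (Ω : Set E) (γ : ℝ → E) : ℝ :=
  ∫ t in (0:ℝ)..1, ‖deriv γ t‖ / infDist (γ t) (frontier Ω)

/-- A rectifiable curve in `Ω` joining `x` and `y`, formalized as a map on `[0,1]`
which is Lipschitz on `[0,1]` (every rectifiable curve admits such a
parametrization), takes values in `Ω`, and joins `x` to `y`. -/
def IsRectPath (Ω : Set E) (x y : E) (γ : ℝ → E) : Prop :=
  (∃ K : NNReal, LipschitzOnWith K γ (Icc 0 1)) ∧
    MapsTo γ (Icc 0 1) Ω ∧ γ 0 = x ∧ γ 1 = y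

/-- The quasihyperbolic metric on `Ω`. -/
def qhDist (Ω : Set E) (x y : E) : ℝ :=
  sInf (qhLength Ω '' {γ | IsRectPath Ω x y γ})

/-- The quasihyperbolic ball. -/
def qhBall (Ω : Set E) (x : E) (r : ℝ) : Set E :=
  {y ∈ Ω | qhDist Ω x y < r}

/-- The distance ratio metric (`j`-metric) on `Ω`. -/
def jDist (Ω : Set E) (x y : E) : ℝ :=
  Real.log (1 + dist x y / min (infDist x (frontier Ω)) (infDist y (frontier Ω)))

/-- The `j`-metric ball. -/
def jBall (Ω : Set E) (x : E) (r : ℝ) : Set E :=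
  {y ∈ Ω | jDist Ω x y < r}

/-- `G` is strictly starlike with respect to `x`: it is starlike with respect to `x`
and every half-line emanating from `x` meets `∂G` at exactly one point. -/
def StrictlyStarlike (G : Set E) (x : E) : Prop :=
  StarConvex ℝ x G ∧
    ∀ v : E, v ≠ 0 → ∃! p : E, p ∈ frontier G ∧ ∃ t : ℝ, 0 < t ∧ p = x + t • v

/-- `G` is strictly convex: it is strictly starlike with respect to each of its points. -/
def StrictlyConvexSet (G : Set E) : Prop :=
  ∀ x ∈ G, StrictlyStarlike G x

/-- A half-line: `{t • v + z : t > 0}` or `{t • v + z : t ≥ 0}` with `v ≠ 0`. -/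
def IsHalfline (L : Set E) : Prop :=
  ∃ z v : E, v ≠ 0 ∧
    (L = {p | ∃ t : ℝ, 0 < t ∧ p = t • v + z} ∨
      L = {p | ∃ t : ℝ, 0 ≤ t ∧ p = t • v + z})

/-- `G` is close-to-convex: its complement can be covered with pairwise
non-intersecting half-lines. -/
def CloseToConvex (G : Set E) : Prop :=
  ∃ 𝒮 : Set (Set E), (∀ L ∈ 𝒮, IsHalfline L) ∧ 𝒮.PairwiseDisjoint id ∧ Gᶜ = ⋃₀ 𝒮

end

/-!
Reparametrize two geodesics from `x` to `y` proportionally to quasihyperbolic arc length, so that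
their quasihyperbolic speed is at most `L = k_Ω(x, y)`. On a convex domain the distance to the
boundary is concave, so the midpoint `(σ₁ + σ₂) / 2` also has speed at most `L`; as it joins `x` to
`y`, its speed equals `L` almost everywhere. Strict convexity of the norm then makes the two
velocities parallel, and `‖(σ₁ - σ₂)'‖ = L |d(σ₁, ∂Ω) - d(σ₂, ∂Ω)| ≤ L ‖σ₁ - σ₂‖`. Since `σ₁` and
`σ₂` start at the same point, Grönwall's inequality gives `σ₁ = σ₂`.
-/

section Lipschitz

variable {F : Type*} [NormedAddCommGroup F] [NormedSpace ℝ F] {f : ℝ → F} {K : NNReal}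
  {a b : ℝ}

lemma abs_deriv_norm_le_norm_deriv {t : ℝ} (hf : DifferentiableAt ℝ f t) :
    |deriv (fun s => ‖f s‖) t| ≤ ‖deriv f t‖ := by
  by_cases hn : DifferentiableAt ℝ (fun s => ‖f s‖) t
  · refine le_of_tendsto_of_tendsto' (hasDerivAt_iff_tendsto_slope.1 hn.hasDerivAt).abs
      (hasDerivAt_iff_tendsto_slope.1 hf.hasDerivAt).norm fun s => ?_
    simp only [slope_def_module, norm_smul, smul_eq_mul, abs_mul, Real.norm_eq_abs]
    gcongr
    exact abs_norm_sub_norm_le _ _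
  · simp [deriv_zero_of_not_differentiableAt hn]

lemma intervalIntegrable_norm_deriv_of_lipschitzOnWith [CompleteSpace F]
    (hf : LipschitzOnWith K f (uIcc a b)) :
    IntervalIntegrable (fun t => ‖deriv f t‖) volume a b := by
  rw [intervalIntegrable_iff, uIoc, integrableOn_Ioc_iff_integrableOn_Ioo]
  refine .of_bound measure_Ioo_lt_top (aestronglyMeasurable_deriv f _).norm K ?_
  filter_upwards [ae_restrict_mem measurableSet_Ioo] with t ht
  rw [norm_norm]
  exact norm_deriv_le_of_lipschitzOn (Icc_mem_nhds ht.1 ht.2) hf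

variable [FiniteDimensional ℝ F]

lemma ae_differentiableAt_of_lipschitzOnWith (hf : LipschitzOnWith K f (uIcc a b)) :
    ∀ᵐ t, t ∈ uIcc a b → DifferentiableAt ℝ f t :=
  hf.absolutelyContinuousOnInterval.boundedVariationOn.ae_differentiableAt_of_mem_uIcc

lemma norm_sub_le_integral_norm_deriv (hf : LipschitzOnWith K f (uIcc a b)) (hab : a ≤ b) :
    ‖f b - f a‖ ≤ ∫ t in a..b, ‖deriv f t‖ := by
  have hlip : LipschitzOnWith (1 * (K + 0)) (fun t => ‖f t - f a‖) (uIcc a b) :=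
    lipschitzWith_one_norm.comp_lipschitzOnWith (hf.sub (LipschitzWith.const (f a)).lipschitzOnWith)
  have hac := hlip.absolutelyContinuousOnInterval
  calc ‖f b - f a‖ = ∫ t in a..b, deriv (fun t => ‖f t - f a‖) t := by
        rw [hac.integral_deriv_eq_sub, sub_self, norm_zero, sub_zero]
    _ ≤ ∫ t in a..b, ‖deriv f t‖ := by
        refine intervalIntegral.integral_mono_ae_restrict hab hac.intervalIntegrable_deriv
          (intervalIntegrable_norm_deriv_of_lipschitzOnWith hf) ?_
        rw [← uIcc_of_le hab, Filter.EventuallyLE, ae_restrict_iff' measurableSet_uIcc]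
        filter_upwards [ae_differentiableAt_of_lipschitzOnWith hf] with t hd ht
        have := abs_deriv_norm_le_norm_deriv ((hd ht).sub_const (f a))
        rw [deriv_sub_const] at this
        exact (le_abs_self _).trans this

-- Grönwall: `exp (-L t) * ‖f t‖` has nonpositive derivative almost everywhere.
lemma eqOn_zero_of_ae_norm_deriv_le {L : ℝ} (hf : LipschitzOnWith K f (Icc a b)) (hfa : f a = 0)
    (hL : ∀ᵐ t, t ∈ Icc a b → ‖deriv f t‖ ≤ L * ‖f t‖) : EqOn f 0 (Icc a b) := by
  intro s hs
  have hsub : uIcc a s ⊆ Icc a b := uIcc_of_le hs.1 ▸ Icc_subset_Icc_right hs.2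
  have hnorm : LipschitzOnWith (1 * K) (fun t => ‖f t‖) (uIcc a s) :=
    lipschitzWith_one_norm.comp_lipschitzOnWith (hf.mono hsub)
  have hexp (t : ℝ) : HasDerivAt (fun t => Real.exp (-L * t)) (Real.exp (-L * t) * -L) t := by
    simpa using ((hasDerivAt_id t).const_mul (-L)).exp
  have hac : AbsolutelyContinuousOnInterval (fun t => Real.exp (-L * t) * ‖f t‖) a s :=
    (ContDiffOn.absolutelyContinuousOnInterval (by fun_prop)).fun_mul
      hnorm.absolutelyContinuousOnInterval
  have hderiv : ∀ᵐ t, t ∈ uIcc a s → deriv (fun t => Real.exp (-L * t) * ‖f t‖) t ≤ 0 := by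
    filter_upwards [hL, ae_differentiableAt_of_lipschitzOnWith (hf.mono hsub),
      ae_differentiableAt_of_lipschitzOnWith hnorm] with t hLt hft hnt ht
    have hle : deriv (fun t => ‖f t‖) t ≤ L * ‖f t‖ :=
      (le_abs_self _).trans ((abs_deriv_norm_le_norm_deriv (hft ht)).trans (hLt (hsub ht)))
    rw [((hexp t).fun_mul (hnt ht).hasDerivAt).deriv]
    nlinarith [Real.exp_pos (-L * t)]
  have hnonpos : Real.exp (-L * s) * ‖f s‖ ≤ 0 := by
    have hint := hac.integral_deriv_eq_sub
    rw [hfa, norm_zero, mul_zero, sub_zero] at hint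
    rw [← hint, ← neg_nonneg, ← intervalIntegral.integral_neg]
    refine intervalIntegral.integral_nonneg_of_ae_restrict hs.1 ?_
    rw [← uIcc_of_le hs.1, Filter.EventuallyLE, ae_restrict_iff' measurableSet_uIcc]
    filter_upwards [hderiv] with t hd ht
    exact neg_nonneg.2 (hd ht)
  exact norm_le_zero_iff.1 (nonpos_of_mul_nonpos_right hnonpos (Real.exp_pos _))

end Lipschitz

section Domain

open scoped Pointwise

lemma le_infDist_frontier_of_ball_subset {X : Type*} [PseudoMetricSpace X] {s : Set X} {z : X}
    {r : ℝ} (hf : (frontier s).Nonempty) (hr : ball z r ⊆ s) :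
    r ≤ infDist z (frontier s) := by
  refine (le_infDist hf).2 fun p hp => ?_
  by_contra! hlt
  exact hp.2 (interior_maximal hr isOpen_ball (mem_ball'.2 hlt))

variable {E : Type*} [NormedAddCommGroup E] [NormedSpace ℝ E] {Ω : Set E} {z : E}

lemma infDist_frontier_pos (hopen : IsOpen Ω) (hproper : Ω ≠ univ) (hz : z ∈ Ω) :
    0 < infDist z (frontier Ω) := by
  refine (isClosed_frontier.notMem_iff_infDist_pos
    (nonempty_frontier_iff.2 ⟨⟨z, hz⟩, hproper⟩)).1 fun hzf => ?_
  exact (hopen.frontier_eq ▸ hzf).2 hz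

lemma ball_infDist_frontier_subset (hz : z ∈ Ω) : ball z (infDist z (frontier Ω)) ⊆ Ω := by
  intro p hp
  have hz' : z ∈ ball z (infDist z (frontier Ω)) := mem_ball_self (dist_nonneg.trans_lt hp)
  have hcover : ball z (infDist z (frontier Ω)) ⊆ interior Ω ∪ interior Ωᶜ :=
    compl_frontier_eq_union_interior (s := Ω) ▸ ball_infDist_subset_compl
  have hz_int : z ∈ interior Ω := (hcover hz').resolve_right fun h => interior_subset h hz
  exact interior_subset ((convex_ball z _).isPreconnected.subset_left_of_subset_union
    isOpen_interior isOpen_interior (disjoint_compl_right.mono interior_subset interior_subset)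
    hcover ⟨z, hz', hz_int⟩ hp)

-- A convex combination of balls contained in `Ω` is again a ball contained in `Ω`.
lemma concaveOn_infDist_frontier (hopen : IsOpen Ω) (hconv : Convex ℝ Ω) :
    ConcaveOn ℝ Ω (fun z => infDist z (frontier Ω)) := by
  rcases eq_or_ne Ω univ with rfl | hproper
  · simpa using concaveOn_const (0 : ℝ) convex_univ
  refine concaveOn_iff_forall_pos.2 ⟨hconv, fun z hz w hw a b ha hb hab => ?_⟩
  refine le_infDist_frontier_of_ball_subset (nonempty_frontier_iff.2 ⟨⟨z, hz⟩, hproper⟩) ?_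
  have hz₀ := infDist_frontier_pos hopen hproper hz
  have hw₀ := infDist_frontier_pos hopen hproper hw
  calc ball (a • z + b • w) (a * infDist z (frontier Ω) + b * infDist w (frontier Ω))
      = a • ball z (infDist z (frontier Ω)) + b • ball w (infDist w (frontier Ω)) := by
        rw [_root_.smul_ball ha.ne', _root_.smul_ball hb.ne', Real.norm_of_nonneg ha.le,
          Real.norm_of_nonneg hb.le, ball_add_ball (mul_pos ha hz₀) (mul_pos hb hw₀)]
    _ ⊆ a • Ω + b • Ω := add_subset_add (smul_set_mono (ball_infDist_frontier_subset hz))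
        (smul_set_mono (ball_infDist_frontier_subset hw))
    _ ⊆ Ω := convex_iff_pointwise_add_subset.1 hconv ha.le hb.le hab

end Domain

section RectPath

variable {E : Type*} [NormedAddCommGroup E] {Ω : Set E} {x y : E} {γ : ℝ → E}

namespace IsRectPath

lemma mapsTo (h : IsRectPath Ω x y γ) : MapsTo γ (Icc 0 1) Ω := h.2.1

lemma continuousOn_infDist_frontier (h : IsRectPath Ω x y γ) :
    ContinuousOn (fun t => infDist (γ t) (frontier Ω)) (Icc 0 1) :=
  (continuous_infDist_pt _).comp_continuousOn h.1.choose_spec.continuousOn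

end IsRectPath

end RectPath

section QHSpeed

variable {E : Type*} [NormedAddCommGroup E] [NormedSpace ℝ E] {Ω : Set E} {x y x' y' : E}
  {γ σ₁ σ₂ : ℝ → E}

/-- The quasihyperbolic speed `‖γ'(t)‖ / d(γ(t), ∂Ω)` of a path, i.e. the integrand of
`qhLength`. As there, `deriv` and division take the value `0` outside their natural domain. -/
noncomputable def qhSpeed (Ω : Set E) (γ : ℝ → E) (t : ℝ) : ℝ :=
  ‖deriv γ t‖ / infDist (γ t) (frontier Ω)

lemma qhSpeed_nonneg (Ω : Set E) (γ : ℝ → E) (t : ℝ) : 0 ≤ qhSpeed Ω γ t :=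
  div_nonneg (norm_nonneg _) infDist_nonneg

lemma qhLength_eq_integral_qhSpeed (Ω : Set E) (γ : ℝ → E) :
    qhLength Ω γ = ∫ t in (0 : ℝ)..1, qhSpeed Ω γ t := rfl

lemma qhLength_nonneg (Ω : Set E) (γ : ℝ → E) : 0 ≤ qhLength Ω γ :=
  intervalIntegral.integral_nonneg zero_le_one fun t _ => qhSpeed_nonneg Ω γ t

lemma qhSpeed_le_iff (hopen : IsOpen Ω) (hproper : Ω ≠ univ) {t L : ℝ} (ht : γ t ∈ Ω) :
    qhSpeed Ω γ t ≤ L ↔ ‖deriv γ t‖ ≤ L * infDist (γ t) (frontier Ω) :=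
  div_le_iff₀ (infDist_frontier_pos hopen hproper ht)

namespace IsRectPath

lemma qhDist_le_qhLength (h : IsRectPath Ω x y γ) : qhDist Ω x y ≤ qhLength Ω γ := by
  refine csInf_le ⟨0, ?_⟩ (mem_image_of_mem _ h)
  rintro _ ⟨γ', -, rfl⟩
  exact qhLength_nonneg Ω γ'

lemma ae_differentiableAt [FiniteDimensional ℝ E] (h : IsRectPath Ω x y γ) :
    ∀ᵐ t, t ∈ Icc 0 1 → DifferentiableAt ℝ γ t := by
  obtain ⟨K, hK⟩ := h.1
  rw [← uIcc_of_le zero_le_one] at hK ⊢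
  exact ae_differentiableAt_of_lipschitzOnWith hK

lemma midpoint (hconv : Convex ℝ Ω) (h₁ : IsRectPath Ω x y σ₁) (h₂ : IsRectPath Ω x' y' σ₂) :
    IsRectPath Ω (midpoint ℝ x x') (midpoint ℝ y y') (midpoint ℝ σ₁ σ₂) := by
  obtain ⟨⟨K₁, hK₁⟩, hm₁, rfl, rfl⟩ := h₁
  obtain ⟨⟨K₂, hK₂⟩, hm₂, rfl, rfl⟩ := h₂
  refine ⟨⟨K₁ + K₂, LipschitzOnWith.of_dist_le_mul fun s hs t ht => ?_⟩,
    fun t ht => ?_, pi_midpoint_apply .., pi_midpoint_apply ..⟩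
  · rw [pi_midpoint_apply, pi_midpoint_apply]
    refine (dist_midpoint_midpoint_le _ _ _ _).trans ?_
    have := hK₁.dist_le_mul s hs t ht
    have := hK₂.dist_le_mul s hs t ht
    push_cast
    linarith [dist_nonneg (x := σ₁ s) (y := σ₁ t), dist_nonneg (x := σ₂ s) (y := σ₂ t)]
  · rw [pi_midpoint_apply]
    exact hconv.midpoint_mem (hm₁ ht) (hm₂ ht)

variable (hopen : IsOpen Ω) (hproper : Ω ≠ univ)
include hopen hproper

lemma infDist_frontier_pos (h : IsRectPath Ω x y γ) {t : ℝ} (ht : t ∈ Icc (0 : ℝ) 1) :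
    0 < infDist (γ t) (frontier Ω) :=
  _root_.infDist_frontier_pos hopen hproper (h.mapsTo ht)

lemma intervalIntegrable_qhSpeed [CompleteSpace E] (h : IsRectPath Ω x y γ) :
    IntervalIntegrable (qhSpeed Ω γ) volume 0 1 := by
  obtain ⟨K, hK⟩ := h.1
  have hinv : ContinuousOn (fun t => (infDist (γ t) (frontier Ω))⁻¹) (Icc 0 1) :=
    h.continuousOn_infDist_frontier.inv₀ fun t ht => (h.infDist_frontier_pos hopen hproper ht).ne'
  rw [← uIcc_of_le zero_le_one] at hK hinv
  exact (intervalIntegrable_norm_deriv_of_lipschitzOnWith hK).mul_continuousOn hinv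

end IsRectPath

end QHSpeed

section Reparametrization

open Filter Topology

variable {E : Type*} [NormedAddCommGroup E] [NormedSpace ℝ E] {Ω : Set E} {x y : E}
  {γ : ℝ → E}

/-- The quasihyperbolic length of the restriction of `γ` to `[0, t]`. -/
noncomputable def qhArcLength (Ω : Set E) (γ : ℝ → E) (t : ℝ) : ℝ :=
  ∫ u in (0 : ℝ)..t, qhSpeed Ω γ u

/-- The reparametrization of `γ` on `[0,1]` proportional to quasihyperbolic arc length. Where the
arc length is not injective, `invFunOn` picks an arbitrary preimage; the value of `γ` there does
not depend on it. -/
noncomputable def qhReparam (Ω : Set E) (γ : ℝ → E) (u : ℝ) : E :=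
  γ (Function.invFunOn (qhArcLength Ω γ) (Icc 0 1) (qhLength Ω γ * u))

lemma qhArcLength_zero : qhArcLength Ω γ 0 = 0 := intervalIntegral.integral_same

lemma qhArcLength_one : qhArcLength Ω γ 1 = qhLength Ω γ := rfl

lemma image_qhLength_mul_Icc : (qhLength Ω γ * ·) '' Icc 0 1 = Icc 0 (qhLength Ω γ) := by
  simpa [uIcc_of_le, qhLength_nonneg] using image_const_mul_uIcc (qhLength Ω γ) 0 1

namespace IsRectPath

variable (hopen : IsOpen Ω) (hproper : Ω ≠ univ)
include hopen hproper

section CompleteSpace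

variable [CompleteSpace E]

lemma intervalIntegrable_qhSpeed_of_mem (h : IsRectPath Ω x y γ) {s t : ℝ} (hs : s ∈ Icc (0 : ℝ) 1)
    (ht : t ∈ Icc (0 : ℝ) 1) : IntervalIntegrable (qhSpeed Ω γ) volume s t := by
  rw [← uIcc_of_le zero_le_one] at hs ht
  exact (h.intervalIntegrable_qhSpeed hopen hproper).mono_set (uIcc_subset_uIcc hs ht)

lemma qhArcLength_sub (h : IsRectPath Ω x y γ) {s t : ℝ} (hs : s ∈ Icc (0 : ℝ) 1)
    (ht : t ∈ Icc (0 : ℝ) 1) :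
    qhArcLength Ω γ t - qhArcLength Ω γ s = ∫ u in s..t, qhSpeed Ω γ u :=
  intervalIntegral.integral_interval_sub_left
    (h.intervalIntegrable_qhSpeed_of_mem hopen hproper (left_mem_Icc.2 zero_le_one) ht)
    (h.intervalIntegrable_qhSpeed_of_mem hopen hproper (left_mem_Icc.2 zero_le_one) hs)

lemma monotoneOn_qhArcLength (h : IsRectPath Ω x y γ) :
    MonotoneOn (qhArcLength Ω γ) (Icc 0 1) := by
  intro s hs t ht hst
  rw [← sub_nonneg, h.qhArcLength_sub hopen hproper hs ht]
  exact intervalIntegral.integral_nonneg hst fun u _ => qhSpeed_nonneg Ω γ u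

lemma continuousOn_qhArcLength (h : IsRectPath Ω x y γ) :
    ContinuousOn (qhArcLength Ω γ) (Icc 0 1) := by
  rw [← uIcc_of_le zero_le_one]
  exact intervalIntegral.continuousOn_primitive_interval'
    (h.intervalIntegrable_qhSpeed hopen hproper) left_mem_uIcc

lemma image_qhArcLength (h : IsRectPath Ω x y γ) :
    qhArcLength Ω γ '' Icc 0 1 = Icc 0 (qhLength Ω γ) := by
  rw [(h.continuousOn_qhArcLength hopen hproper).image_Icc_of_monotoneOn zero_le_one
    (h.monotoneOn_qhArcLength hopen hproper), qhArcLength_zero, qhArcLength_one]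

lemma exists_qhArcLength_eq (h : IsRectPath Ω x y γ) {u : ℝ} (hu : u ∈ Icc (0 : ℝ) 1) :
    ∃ t ∈ Icc (0 : ℝ) 1, qhArcLength Ω γ t = qhLength Ω γ * u := by
  have hmem : qhLength Ω γ * u ∈ qhArcLength Ω γ '' Icc 0 1 := by
    rw [h.image_qhArcLength hopen hproper, ← image_qhLength_mul_Icc]
    exact mem_image_of_mem _ hu
  exact hmem

lemma exists_qhLength_mul_eq (h : IsRectPath Ω x y γ) {t : ℝ} (ht : t ∈ Icc (0 : ℝ) 1) :
    ∃ u ∈ Icc (0 : ℝ) 1, qhLength Ω γ * u = qhArcLength Ω γ t := by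
  have hmem : qhArcLength Ω γ t ∈ (qhLength Ω γ * ·) '' Icc 0 1 := by
    rw [image_qhLength_mul_Icc, ← h.image_qhArcLength hopen hproper]
    exact mem_image_of_mem _ ht
  exact hmem

end CompleteSpace

variable [FiniteDimensional ℝ E]

lemma dist_le_mul_qhArcLength_sub (h : IsRectPath Ω x y γ) {s t C : ℝ} (hs : s ∈ Icc (0 : ℝ) 1)
    (ht : t ∈ Icc (0 : ℝ) 1) (hst : s ≤ t)
    (hC : ∀ u ∈ Icc s t, infDist (γ u) (frontier Ω) ≤ C) :
    dist (γ s) (γ t) ≤ C * (qhArcLength Ω γ t - qhArcLength Ω γ s) := by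
  obtain ⟨K, hK⟩ := h.1
  have := FiniteDimensional.complete ℝ E
  have hsub : Icc s t ⊆ Icc 0 1 := Icc_subset_Icc hs.1 ht.2
  replace hK : LipschitzOnWith K γ (uIcc s t) := hK.mono (uIcc_of_le hst ▸ hsub)
  have hint := h.intervalIntegrable_qhSpeed_of_mem hopen hproper hs ht
  have hpos {u : ℝ} (hu : u ∈ Icc s t) := h.infDist_frontier_pos hopen hproper (hsub hu)
  calc dist (γ s) (γ t) ≤ ∫ u in s..t, ‖deriv γ u‖ := by
        rw [dist_comm, dist_eq_norm]
        exact norm_sub_le_integral_norm_deriv hK hst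
    _ ≤ ∫ u in s..t, C * qhSpeed Ω γ u := by
        refine intervalIntegral.integral_mono_on hst
          (intervalIntegrable_norm_deriv_of_lipschitzOnWith hK) (hint.const_mul C) fun u hu => ?_
        rw [← div_mul_cancel₀ ‖deriv γ u‖ (hpos hu).ne', mul_comm]
        exact mul_le_mul_of_nonneg_right (hC u hu) (qhSpeed_nonneg Ω γ u)
    _ = C * (qhArcLength Ω γ t - qhArcLength Ω γ s) := by
        rw [intervalIntegral.integral_const_mul, h.qhArcLength_sub hopen hproper hs ht]

lemma dist_le_mul_abs_qhArcLength_sub (h : IsRectPath Ω x y γ) {s t C : ℝ} (hs : s ∈ Icc (0 : ℝ) 1)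
    (ht : t ∈ Icc (0 : ℝ) 1) (hC : ∀ u ∈ uIcc s t, infDist (γ u) (frontier Ω) ≤ C) :
    dist (γ s) (γ t) ≤ C * |qhArcLength Ω γ s - qhArcLength Ω γ t| := by
  have := FiniteDimensional.complete ℝ E
  wlog hst : s ≤ t generalizing s t
  · rw [dist_comm, abs_sub_comm]
    exact this ht hs (uIcc_comm s t ▸ hC) (le_of_not_ge hst)
  rw [uIcc_of_le hst] at hC
  rw [abs_sub_comm,
    abs_of_nonneg (sub_nonneg.2 (h.monotoneOn_qhArcLength hopen hproper hs ht hst))]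
  exact h.dist_le_mul_qhArcLength_sub hopen hproper hs ht hst hC

lemma eq_of_qhArcLength_eq (h : IsRectPath Ω x y γ) {s t : ℝ} (hs : s ∈ Icc (0 : ℝ) 1)
    (ht : t ∈ Icc (0 : ℝ) 1) (hst : qhArcLength Ω γ s = qhArcLength Ω γ t) : γ s = γ t := by
  obtain ⟨M, hM⟩ := isCompact_Icc.bddAbove_image h.continuousOn_infDist_frontier
  have hdist := h.dist_le_mul_abs_qhArcLength_sub hopen hproper hs ht (C := M) fun u hu =>
    hM (mem_image_of_mem _ (ordConnected_Icc.uIcc_subset hs ht hu))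
  rw [hst, sub_self, abs_zero, mul_zero] at hdist
  exact dist_le_zero.1 hdist

lemma qhReparam_eq (h : IsRectPath Ω x y γ) {t u : ℝ} (ht : t ∈ Icc (0 : ℝ) 1)
    (htu : qhArcLength Ω γ t = qhLength Ω γ * u) : qhReparam Ω γ u = γ t :=
  have hex : ∃ s ∈ Icc (0 : ℝ) 1, qhArcLength Ω γ s = qhLength Ω γ * u := ⟨t, ht, htu⟩
  h.eq_of_qhArcLength_eq hopen hproper (Function.invFunOn_mem hex) ht
    ((Function.invFunOn_eq hex).trans htu.symm)

lemma image_qhReparam (h : IsRectPath Ω x y γ) :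
    qhReparam Ω γ '' Icc 0 1 = γ '' Icc 0 1 := by
  have := FiniteDimensional.complete ℝ E
  apply Subset.antisymm
  · rintro _ ⟨u, hu, rfl⟩
    obtain ⟨t, ht, htu⟩ := h.exists_qhArcLength_eq hopen hproper hu
    exact ⟨t, ht, (h.qhReparam_eq hopen hproper ht htu).symm⟩
  · rintro _ ⟨t, ht, rfl⟩
    obtain ⟨u, hu, hut⟩ := h.exists_qhLength_mul_eq hopen hproper ht
    exact ⟨u, hu, h.qhReparam_eq hopen hproper ht hut.symm⟩

lemma dist_qhReparam_le (h : IsRectPath Ω x y γ) {u v C : ℝ} (hu : u ∈ Icc (0 : ℝ) 1)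
    (hv : v ∈ Icc (0 : ℝ) 1) (hC : ∀ w ∈ uIcc u v, infDist (qhReparam Ω γ w) (frontier Ω) ≤ C) :
    dist (qhReparam Ω γ u) (qhReparam Ω γ v) ≤ C * qhLength Ω γ * |u - v| := by
  have := FiniteDimensional.complete ℝ E
  obtain ⟨s, hs, hsu⟩ := h.exists_qhArcLength_eq hopen hproper hu
  obtain ⟨t, ht, htv⟩ := h.exists_qhArcLength_eq hopen hproper hv
  have hst : uIcc s t ⊆ Icc 0 1 := ordConnected_Icc.uIcc_subset hs ht
  have hC' : ∀ r ∈ uIcc s t, infDist (γ r) (frontier Ω) ≤ C := by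
    intro r hr
    have hmem := ((h.monotoneOn_qhArcLength hopen hproper).mono hst).mapsTo_uIcc hr
    rw [hsu, htv, ← image_const_mul_uIcc] at hmem
    obtain ⟨w, hw, hwr⟩ := hmem
    rw [← h.qhReparam_eq hopen hproper (hst hr) hwr.symm]
    exact hC w hw
  rw [h.qhReparam_eq hopen hproper hs hsu, h.qhReparam_eq hopen hproper ht htv]
  refine (h.dist_le_mul_abs_qhArcLength_sub hopen hproper hs ht hC').trans_eq ?_
  rw [hsu, htv, ← mul_sub, abs_mul, abs_of_nonneg (qhLength_nonneg Ω γ), mul_assoc]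

lemma qhReparam (h : IsRectPath Ω x y γ) : IsRectPath Ω x y (qhReparam Ω γ) := by
  have hmaps : MapsTo (_root_.qhReparam Ω γ) (Icc 0 1) (γ '' Icc 0 1) :=
    h.image_qhReparam hopen hproper ▸ mapsTo_image _ _
  obtain ⟨M, hM⟩ := isCompact_Icc.bddAbove_image h.continuousOn_infDist_frontier
  have hbound {u : ℝ} (hu : u ∈ Icc (0 : ℝ) 1) :
      infDist (_root_.qhReparam Ω γ u) (frontier Ω) ≤ M := by
    obtain ⟨t, ht, htu⟩ := hmaps hu
    exact htu ▸ hM (mem_image_of_mem _ ht)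
  refine ⟨⟨(M * qhLength Ω γ).toNNReal, LipschitzOnWith.of_dist_le' fun u hu v hv => ?_⟩,
    hmaps.mono_right h.mapsTo.image_subset, ?_, ?_⟩
  · exact h.dist_qhReparam_le hopen hproper hu hv fun w hw =>
      hbound (ordConnected_Icc.uIcc_subset hu hv hw)
  · rw [h.qhReparam_eq hopen hproper (left_mem_Icc.2 zero_le_one)
      (by rw [qhArcLength_zero, mul_zero]), h.2.2.1]
  · rw [h.qhReparam_eq hopen hproper (right_mem_Icc.2 zero_le_one)
      (by rw [qhArcLength_one, mul_one]), h.2.2.2]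

lemma qhSpeed_qhReparam_le (h : IsRectPath Ω x y γ) {t : ℝ} (ht : t ∈ Ioo (0 : ℝ) 1) :
    qhSpeed Ω (_root_.qhReparam Ω γ) t ≤ qhLength Ω γ := by
  have hσ := h.qhReparam hopen hproper
  set σ := _root_.qhReparam Ω γ
  have hI : Icc (0 : ℝ) 1 ∈ 𝓝 t := Icc_mem_nhds ht.1 ht.2
  have hcont : ContinuousAt (fun s => infDist (σ s) (frontier Ω)) t :=
    hσ.continuousOn_infDist_frontier.continuousAt hI
  have hbound {C : ℝ} (hC : infDist (σ t) (frontier Ω) < C) :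
      ‖deriv σ t‖ ≤ C * qhLength Ω γ := by
    refine norm_deriv_le_of_lip'
      (mul_nonneg (infDist_nonneg.trans hC.le) (qhLength_nonneg Ω γ)) ?_
    have hnear : ∀ᶠ v in 𝓝 t, ∀ w ∈ uIcc v t, infDist (σ w) (frontier Ω) ≤ C :=
      (tendsto_id.uIcc tendsto_const_nhds).eventually
        (eventually_smallSets_subset.2 (hcont.eventually_le_const hC))
    filter_upwards [hI, hnear] with v hv hvC
    rw [← dist_eq_norm, Real.norm_eq_abs]
    exact h.dist_qhReparam_le hopen hproper hv (Ioo_subset_Icc_self ht) hvC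
  rw [qhSpeed_le_iff hopen hproper (hσ.mapsTo (Ioo_subset_Icc_self ht)), mul_comm]
  have hlim : Tendsto (fun C => C * qhLength Ω γ) (𝓝[>] infDist (σ t) (frontier Ω))
      (𝓝 (infDist (σ t) (frontier Ω) * qhLength Ω γ)) :=
    ((continuous_mul_const _).tendsto _).mono_left nhdsWithin_le_nhds
  exact ge_of_tendsto hlim (eventually_mem_nhdsWithin.mono fun C hC => hbound hC)

end IsRectPath

end Reparametrization

section Midpoint

variable {E : Type*} [NormedAddCommGroup E] [NormedSpace ℝ E] {Ω : Set E} {x y z w : E}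
  {σ₁ σ₂ : ℝ → E} {t L : ℝ}

lemma two_mul_norm_midpoint (v w : E) : 2 * ‖midpoint ℝ v w‖ = ‖v + w‖ := by
  rw [← Real.norm_two, ← norm_smul, two_smul, midpoint_add_self]

lemma deriv_midpoint (hd₁ : DifferentiableAt ℝ σ₁ t) (hd₂ : DifferentiableAt ℝ σ₂ t) :
    deriv (midpoint ℝ σ₁ σ₂) t = midpoint ℝ (deriv σ₁ t) (deriv σ₂ t) := by
  simp only [midpoint_eq_smul_add]
  exact ((hd₁.hasDerivAt.add hd₂.hasDerivAt).const_smul _).deriv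

lemma norm_sub_eq_abs_sub_of_add_le_norm_add [StrictConvexSpace ℝ E] {v w : E} {a b : ℝ}
    (hv : ‖v‖ ≤ a) (hw : ‖w‖ ≤ b) (hab : a + b ≤ ‖v + w‖) : ‖v - w‖ = |a - b| := by
  have htri := norm_add_le v w
  have hray : SameRay ℝ v w := sameRay_iff_norm_add.2 (by linarith)
  rw [hray.norm_sub, show ‖v‖ = a by linarith, show ‖w‖ = b by linarith]

variable (hopen : IsOpen Ω) (hconv : Convex ℝ Ω)
include hopen hconv

lemma infDist_frontier_add_le_two_mul_midpoint (hz : z ∈ Ω) (hw : w ∈ Ω) :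
    infDist z (frontier Ω) + infDist w (frontier Ω) ≤
      2 * infDist (midpoint ℝ z w) (frontier Ω) := by
  have hmid := (concaveOn_infDist_frontier hopen hconv).2 hz hw (inv_nonneg.2 zero_le_two)
    (inv_nonneg.2 zero_le_two) (by norm_num)
  rw [← smul_add, ← smul_add, smul_eq_mul, ← invOf_eq_inv, ← midpoint_eq_smul_add,
    invOf_eq_inv] at hmid
  linarith

variable (hproper : Ω ≠ univ) (hm₁ : σ₁ t ∈ Ω) (hm₂ : σ₂ t ∈ Ω)
  (hd₁ : DifferentiableAt ℝ σ₁ t) (hd₂ : DifferentiableAt ℝ σ₂ t)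
  (hL₁ : qhSpeed Ω σ₁ t ≤ L) (hL₂ : qhSpeed Ω σ₂ t ≤ L)
include hproper hm₁ hm₂ hd₁ hd₂ hL₁ hL₂

lemma qhSpeed_midpoint_le : qhSpeed Ω (midpoint ℝ σ₁ σ₂) t ≤ L := by
  have hL : 0 ≤ L := (qhSpeed_nonneg Ω σ₁ t).trans hL₁
  have hconc := infDist_frontier_add_le_two_mul_midpoint hopen hconv hm₁ hm₂
  rw [qhSpeed_le_iff hopen hproper hm₁] at hL₁
  rw [qhSpeed_le_iff hopen hproper hm₂] at hL₂
  have hm : midpoint ℝ σ₁ σ₂ t ∈ Ω := by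
    rw [pi_midpoint_apply]
    exact hconv.midpoint_mem hm₁ hm₂
  rw [qhSpeed_le_iff hopen hproper hm, pi_midpoint_apply, deriv_midpoint hd₁ hd₂,
    ← mul_le_mul_iff_right₀ two_pos, two_mul_norm_midpoint]
  calc ‖deriv σ₁ t + deriv σ₂ t‖
      ≤ L * infDist (σ₁ t) (frontier Ω) + L * infDist (σ₂ t) (frontier Ω) :=
        norm_add_le_of_le hL₁ hL₂
    _ = L * (infDist (σ₁ t) (frontier Ω) + infDist (σ₂ t) (frontier Ω)) := (mul_add ..).symm
    _ ≤ L * (2 * infDist (midpoint ℝ (σ₁ t) (σ₂ t)) (frontier Ω)) := by gcongr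
    _ = 2 * (L * infDist (midpoint ℝ (σ₁ t) (σ₂ t)) (frontier Ω)) := mul_left_comm ..

lemma norm_deriv_sub_le_of_qhSpeed_midpoint_eq [StrictConvexSpace ℝ E]
    (heq : qhSpeed Ω (midpoint ℝ σ₁ σ₂) t = L) :
    ‖deriv (σ₁ - σ₂) t‖ ≤ L * ‖(σ₁ - σ₂) t‖ := by
  have hL : 0 ≤ L := (qhSpeed_nonneg Ω σ₁ t).trans hL₁
  have hconc := infDist_frontier_add_le_two_mul_midpoint hopen hconv hm₁ hm₂
  rw [qhSpeed_le_iff hopen hproper hm₁] at hL₁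
  rw [qhSpeed_le_iff hopen hproper hm₂] at hL₂
  rw [qhSpeed, pi_midpoint_apply, deriv_midpoint hd₁ hd₂,
    div_eq_iff (infDist_frontier_pos hopen hproper (hconv.midpoint_mem hm₁ hm₂)).ne'] at heq
  have hsum : L * infDist (σ₁ t) (frontier Ω) + L * infDist (σ₂ t) (frontier Ω) ≤
      ‖deriv σ₁ t + deriv σ₂ t‖ := by
    rw [← two_mul_norm_midpoint, heq, ← mul_add, mul_left_comm]
    gcongr
  calc ‖deriv (σ₁ - σ₂) t‖ = ‖deriv σ₁ t - deriv σ₂ t‖ := by rw [deriv_sub hd₁ hd₂]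
    _ = |L * infDist (σ₁ t) (frontier Ω) - L * infDist (σ₂ t) (frontier Ω)| :=
        norm_sub_eq_abs_sub_of_add_le_norm_add hL₁ hL₂ hsum
    _ = L * dist (infDist (σ₁ t) (frontier Ω)) (infDist (σ₂ t) (frontier Ω)) := by
        rw [← mul_sub, abs_mul, abs_of_nonneg hL, Real.dist_eq]
    _ ≤ L * ‖(σ₁ - σ₂) t‖ := by
        rw [Pi.sub_apply, ← dist_eq_norm]
        gcongr
        simpa using (lipschitz_infDist_pt (frontier Ω)).dist_le_mul (σ₁ t) (σ₂ t)

end Midpoint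

section Uniqueness

variable {E : Type*} [NormedAddCommGroup E] [NormedSpace ℝ E] {Ω : Set E} {x y : E}
  {γ σ₁ σ₂ : ℝ → E}

lemma IsRectPath.ae_qhSpeed_eq_of_ae_le_qhDist [CompleteSpace E] (hopen : IsOpen Ω)
    (hproper : Ω ≠ univ) (h : IsRectPath Ω x y γ)
    (hle : ∀ᵐ t, t ∈ Ioo (0 : ℝ) 1 → qhSpeed Ω γ t ≤ qhDist Ω x y) :
    ∀ᵐ t, t ∈ Ioo (0 : ℝ) 1 → qhSpeed Ω γ t = qhDist Ω x y := by
  have hint := h.intervalIntegrable_qhSpeed hopen hproper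
  rw [intervalIntegrable_iff_integrableOn_Ioo_of_le zero_le_one] at hint
  rw [← ae_restrict_iff' measurableSet_Ioo] at hle ⊢
  have hconst : ∫ _ in Ioo (0 : ℝ) 1, qhDist Ω x y = qhDist Ω x y := by simp
  have hlength : ∫ t in Ioo (0 : ℝ) 1, qhSpeed Ω γ t = qhLength Ω γ := by
    rw [qhLength_eq_integral_qhSpeed, intervalIntegral.integral_of_le zero_le_one,
      integral_Ioc_eq_integral_Ioo]
  refine (integral_eq_iff_of_ae_le hint (integrable_const _) hle).1 (le_antisymm ?_ ?_)
  · exact integral_mono_ae hint (integrable_const _) hle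
  · rw [hconst, hlength]
    exact h.qhDist_le_qhLength

variable [FiniteDimensional ℝ E] [StrictConvexSpace ℝ E]

lemma eqOn_of_qhSpeed_le_qhDist (hopen : IsOpen Ω) (hconv : Convex ℝ Ω)
    (hproper : Ω ≠ univ) (h₁ : IsRectPath Ω x y σ₁) (h₂ : IsRectPath Ω x y σ₂)
    (hL₁ : ∀ t ∈ Ioo (0 : ℝ) 1, qhSpeed Ω σ₁ t ≤ qhDist Ω x y)
    (hL₂ : ∀ t ∈ Ioo (0 : ℝ) 1, qhSpeed Ω σ₂ t ≤ qhDist Ω x y) : EqOn σ₁ σ₂ (Icc 0 1) := by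
  have hmid : IsRectPath Ω x y (midpoint ℝ σ₁ σ₂) := by
    simpa only [midpoint_self] using h₁.midpoint hconv h₂
  have hmid_le : ∀ᵐ t, t ∈ Ioo (0 : ℝ) 1 →
      qhSpeed Ω (midpoint ℝ σ₁ σ₂) t ≤ qhDist Ω x y := by
    filter_upwards [h₁.ae_differentiableAt, h₂.ae_differentiableAt] with t hd₁ hd₂ ht
    have ht' := Ioo_subset_Icc_self ht
    exact qhSpeed_midpoint_le hopen hconv hproper (h₁.mapsTo ht') (h₂.mapsTo ht') (hd₁ ht')
      (hd₂ ht') (hL₁ t ht) (hL₂ t ht)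
  have hderiv : ∀ᵐ t, t ∈ Icc (0 : ℝ) 1 →
      ‖deriv (σ₁ - σ₂) t‖ ≤ qhDist Ω x y * ‖(σ₁ - σ₂) t‖ := by
    rw [← ae_restrict_iff' measurableSet_Icc, ← restrict_Ioo_eq_restrict_Icc,
      ae_restrict_iff' measurableSet_Ioo]
    filter_upwards [h₁.ae_differentiableAt, h₂.ae_differentiableAt,
      hmid.ae_qhSpeed_eq_of_ae_le_qhDist hopen hproper hmid_le] with t hd₁ hd₂ heq ht
    have ht' := Ioo_subset_Icc_self ht
    exact norm_deriv_sub_le_of_qhSpeed_midpoint_eq hopen hconv hproper (h₁.mapsTo ht')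
      (h₂.mapsTo ht') (hd₁ ht') (hd₂ ht') (hL₁ t ht) (hL₂ t ht) (heq ht)
  obtain ⟨K₁, hK₁⟩ := h₁.1
  obtain ⟨K₂, hK₂⟩ := h₂.1
  have hzero : (σ₁ - σ₂) 0 = 0 := by rw [Pi.sub_apply, h₁.2.2.1, h₂.2.2.1, sub_self]
  intro t ht
  exact sub_eq_zero.1 (eqOn_zero_of_ae_norm_deriv_le (hK₁.sub hK₂) hzero hderiv ht)

end Uniqueness

theorem qh_geodesic_unique_of_convex_domain_general {E : Type*} [NormedAddCommGroup E]
    [NormedSpace ℝ E] [FiniteDimensional ℝ E] [StrictConvexSpace ℝ E] {Ω : Set E} {x y : E}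
    {γ₁ γ₂ : ℝ → E} (hopen : IsOpen Ω) (hconv : Convex ℝ Ω)
    (hproper : Ω ≠ univ) (h₁ : IsRectPath Ω x y γ₁) (h₂ : IsRectPath Ω x y γ₂)
    (hlen₁ : qhLength Ω γ₁ = qhDist Ω x y) (hlen₂ : qhLength Ω γ₂ = qhDist Ω x y) :
    γ₁ '' Icc 0 1 = γ₂ '' Icc 0 1 := by
  have hreparam : EqOn (qhReparam Ω γ₁) (qhReparam Ω γ₂) (Icc 0 1) :=
    eqOn_of_qhSpeed_le_qhDist hopen hconv hproper (h₁.qhReparam hopen hproper)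
      (h₂.qhReparam hopen hproper)
      (fun _ ht => hlen₁ ▸ h₁.qhSpeed_qhReparam_le hopen hproper ht)
      (fun _ ht => hlen₂ ▸ h₂.qhSpeed_qhReparam_le hopen hproper ht)
  rw [← h₁.image_qhReparam hopen hproper, ← h₂.image_qhReparam hopen hproper]
  exact hreparam.image_eq

/-- in a convex proper subdomain of `ℝⁿ`, quasihyperbolic geodesics are
unique: any two rectifiable arcs from `x` to `y` realizing the quasihyperbolic
distance have the same image. -/
theorem qh_geodesic_unique_of_convex_domain (n : ℕ) (hn : 2 ≤ n)
    (Ω : Set (EuclideanSpace ℝ (Fin n)))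
    (hopen : IsOpen Ω) (hne : Ω.Nonempty) (hconv : Convex ℝ Ω) (hproper : Ω ≠ univ)
    (x y : EuclideanSpace ℝ (Fin n)) (hx : x ∈ Ω) (hy : y ∈ Ω)
    (γ₁ γ₂ : ℝ → EuclideanSpace ℝ (Fin n))
    (h₁ : IsRectPath Ω x y γ₁) (h₂ : IsRectPath Ω x y γ₂)
    (hinj₁ : InjOn γ₁ (Icc 0 1)) (hinj₂ : InjOn γ₂ (Icc 0 1))
    (hlen₁ : qhLength Ω γ₁ = qhDist Ω x y) (hlen₂ : qhLength Ω γ₂ = qhDist Ω x y) :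
    γ₁ '' Icc 0 1 = γ₂ '' Icc 0 1 :=
  qh_geodesic_unique_of_convex_domain_general hopen hconv hproper h₁ h₂ hlen₁ hlen₂
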